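/- arXiv:2005.09626 — 4 statements merged into one kernel-verified Lean document; each statement's English description precedes it below -/
import Mathlib

section
/- Let Γ ⊆ [0,1] be a set of real numbers satisfying the DCC and let n be a non-negative integer. Then there exists a real number γ > 0 (depending only on Γ and n) such that for every k ∈ ℕ, every family b₁, …, b_k of elements of Γ and every family n₁, …, n_k of non-negative integers, if ∑_{i=1}^k n_i·b_i − n > 0, then ∑_{i=1}^k n_i·b_i − n ≥ γ. -/
/-- A set `S ⊆ ℝ` satisfies the descending chain condition (DCC) if every
nonincreasing sequence of elements of `S` is eventually constant. -/
def SatisfiesDCC (S : Set ℝ) : Prop :=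
  ∀ f : ℕ → ℝ, (∀ n, f n ∈ S) → (∀ n, f (n + 1) ≤ f n) → ∃ N, ∀ n ≥ N, f n = f N

theorem SatisfiesDCC.isWF {S : Set ℝ} (hS : SatisfiesDCC S) : S.IsWF := by
  refine Set.isWF_iff_no_descending_seq.2 fun f hf hmem => ?_
  obtain ⟨N, hN⟩ := hS f hmem fun n => (hf n.lt_succ_self).le
  exact (hf N.lt_succ_self).ne (hN (N + 1) N.le_succ)

/-- Lemma 3.2: if `Γ ⊆ [0,1]` satisfies the DCC and `n` is a non-negative integer,
then there is `γ > 0` such that any finite non-negative integer combination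
`∑ nᵢ bᵢ` of elements of `Γ` with `∑ nᵢ bᵢ - n > 0` satisfies `∑ nᵢ bᵢ - n ≥ γ`. -/
theorem stmt_0 (Γ : Set ℝ) (hΓ : Γ ⊆ Set.Icc 0 1) (hDCC : SatisfiesDCC Γ) (n : ℕ) :
    ∃ γ : ℝ, 0 < γ ∧
      ∀ (k : ℕ) (b : Fin k → ℝ) (m : Fin k → ℕ),
        (∀ i, b i ∈ Γ) →
        (∑ i, (m i : ℝ) * b i) - n > 0 →
        (∑ i, (m i : ℝ) * b i) - n ≥ γ := by
  have hwf : ((AddSubmonoid.closure Γ : Set ℝ) ∩ Set.Ioi (n : ℝ)).IsWF :=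
    (hDCC.isWF.isPWO.addSubmonoid_closure fun x hx => (hΓ hx).1).isWF.mono Set.inter_subset_left
  have hmem : ∀ (k : ℕ) (b : Fin k → ℝ) (m : Fin k → ℕ), (∀ i, b i ∈ Γ) →
      ∑ i, (m i : ℝ) * b i ∈ AddSubmonoid.closure Γ := fun k b m hb =>
    sum_mem fun i _ => by
      simpa using nsmul_mem (AddSubmonoid.subset_closure (hb i)) (m i)
  rcases Set.eq_empty_or_nonempty ((AddSubmonoid.closure Γ : Set ℝ) ∩ Set.Ioi (n : ℝ))
    with hempty | hne
  · refine ⟨1, one_pos, fun k b m hb hpos => ?_⟩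
    exact (Set.eq_empty_iff_forall_notMem.1 hempty _ ⟨hmem k b m hb, sub_pos.1 hpos⟩).elim
  · refine ⟨hwf.min hne - n, sub_pos.2 (hwf.min_mem hne).2, fun k b m hb hpos => ?_⟩
    exact sub_le_sub_right (hwf.min_le hne ⟨hmem k b m hb, sub_pos.1 hpos⟩) _
end

section
/- Let Γ ⊆ [0,1] be a set of real numbers satisfying the DCC. Then the set S := { ∑_{i=1}^k n_i·b_i : k ∈ ℕ, b₁, …, b_k ∈ Γ, n₁, …, n_k ∈ ℕ } of all finite non-negative integer combinations of elements of Γ also satisfies the DCC. -/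
/-- For sets of reals, the DCC agrees with being partially well-ordered. -/
theorem satisfiesDCC_iff_isPWO (S : Set ℝ) : SatisfiesDCC S ↔ S.IsPWO := by
  rw [Set.isPWO_iff_isWF, Set.isWF_iff_no_descending_seq]
  constructor
  · intro h f hf hS
    obtain ⟨N, hN⟩ := h f hS fun n => (hf n.lt_succ_self).le
    exact (hf N.lt_succ_self).ne (hN (N + 1) N.le_succ)
  · intro h f hS hf
    by_contra! hne
    have hanti : Antitone f := antitone_nat_of_succ_le hf
    choose g hg hgne using hne
    refine h (fun n => f (g^[n] 0)) (strictAnti_nat_of_succ_lt fun n => ?_) fun n => hS _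
    rw [Function.iterate_succ_apply']
    exact (hanti (hg _)).lt_of_ne (hgne _)

/-- If `Γ ⊆ [0,1]` satisfies the DCC, then the set of all finite non-negative
integer combinations of elements of `Γ` also satisfies the DCC. -/
theorem stmt_1 (Γ : Set ℝ) (hΓ : Γ ⊆ Set.Icc 0 1) (hDCC : SatisfiesDCC Γ) :
    SatisfiesDCC {x : ℝ | ∃ (k : ℕ) (b : Fin k → ℝ) (m : Fin k → ℕ),
      (∀ i, b i ∈ Γ) ∧ x = ∑ i, (m i : ℝ) * b i} := by
  rw [satisfiesDCC_iff_isPWO] at hDCC ⊢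
  refine (hDCC.addSubmonoid_closure fun x hx => (hΓ hx).1).mono ?_
  rintro x ⟨k, b, m, hb, rfl⟩
  refine sum_mem fun i _ => ?_
  rw [← nsmul_eq_mul]
  exact nsmul_mem (AddSubmonoid.subset_closure (hb i)) (m i)
end

section
/- Let γ ∈ (0,1] be a real number and Γ ⊆ [0,1] a set of real numbers such that Γ \ {0} ⊆ (γ, 1] and such that for every finite family b₁, …, b_k ∈ Γ and non-negative integers n₁, …, n_k, if ∑ n_i·b_i − 1 > 0 then ∑ n_i·b_i − 1 ≥ γ. Set ε := γ²/8. Then for every finite family b₁′, …, b_k′ of real numbers with each b_i′ ∈ [0,1] and each b_i′ ∈ [b_i − ε, b_i] for some b_i ∈ Γ, and every family of non-negative integers n₁, …, n_k, if ∑ n_i·b_i′ − 1 > 0 then ∑ n_i·b_i′ − 1 ≥ γ/2. -/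
/-- The quantitative claim inside the proof of Lemma 3.4: with `ε = γ²/8`,
integer combinations of perturbed coefficients exceeding `1` exceed it
by at least `γ/2`. -/
theorem stmt_4 (γ : ℝ) (hγ : γ ∈ Set.Ioc (0 : ℝ) 1) (Γ : Set ℝ)
    (hΓ : Γ ⊆ Set.Icc 0 1)
    (hΓ0 : Γ \ {0} ⊆ Set.Ioc γ 1)
    (hgap : ∀ (k : ℕ) (b : Fin k → ℝ) (m : Fin k → ℕ),
      (∀ i, b i ∈ Γ) →
      (∑ i, (m i : ℝ) * b i) - 1 > 0 →
      (∑ i, (m i : ℝ) * b i) - 1 ≥ γ) :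
    ∀ (k : ℕ) (b' : Fin k → ℝ) (m : Fin k → ℕ),
      (∀ i, b' i ∈ Set.Icc (0 : ℝ) 1) →
      (∀ i, ∃ b ∈ Γ, b' i ∈ Set.Icc (b - γ ^ 2 / 8) b) →
      (∑ i, (m i : ℝ) * b' i) - 1 > 0 →
      (∑ i, (m i : ℝ) * b' i) - 1 ≥ γ / 2 := by
  intro k b' m hb' hb hpos
  obtain ⟨hγ0, hγ1⟩ := hγ
  choose b hbΓ hbb using hb
  have hle : ∑ i, (m i : ℝ) * b' i ≤ ∑ i, (m i : ℝ) * b i :=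
    Finset.sum_le_sum fun i _ => mul_le_mul_of_nonneg_left (hbb i).2 (Nat.cast_nonneg _)
  have hgap_b := hgap k b m hbΓ (by linarith)
  have hmul : ∀ i, (1 - γ / 8) * b i ≤ b' i := by
    intro i
    by_cases h0 : b i = 0
    · rw [h0, mul_zero]
      exact (hb' i).1
    · have hγb : γ < b i := (hΓ0 ⟨hbΓ i, h0⟩).1
      nlinarith [(hbb i).1]
  have hge : (1 - γ / 8) * ∑ i, (m i : ℝ) * b i ≤ ∑ i, (m i : ℝ) * b' i := by
    rw [Finset.mul_sum]
    refine Finset.sum_le_sum fun i _ => ?_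
    rw [mul_left_comm]
    exact mul_le_mul_of_nonneg_left (hmul i) (Nat.cast_nonneg _)
  nlinarith
end

section
/- Let n ≥ 1 be an integer and let a : ℕ → ℝ be a sequence such that a(1) ≤ 2 and, for every integer k with 1 ≤ k ≤ n − 1, either a(k+1) ≤ a(k) + 1, or there exists an integer j with 1 ≤ j ≤ k − 1 such that a(k+1) ≤ a(k) + a(j) − 1. Then a(n) ≤ Fib(n+1) + 1, and in particular a(n) ≤ 2^n. Here Fib denotes the Fibonacci sequence normalized by Fib(1) = Fib(2) = 1 and Fib(m+2) = Fib(m+1) + Fib(m). -/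
theorem fib_succ_add_one_le_two_pow {n : ℕ} (hn : 1 ≤ n) : Nat.fib (n + 1) + 1 ≤ 2 ^ n := by
  induction n, hn using Nat.le_induction with
  | base => simp
  | succ k _ ih =>
    have hrec : Nat.fib (k + 1 + 1) = Nat.fib k + Nat.fib (k + 1) := Nat.fib_add_two
    have hmono : Nat.fib k ≤ Nat.fib (k + 1) := Nat.fib_le_fib_succ
    rw [pow_succ]
    omega

theorem le_fib_succ_add_one_of_step {n : ℕ} {a : ℕ → ℝ} (h1 : a 1 ≤ 2)
    (hstep : ∀ k : ℕ, 1 ≤ k → k ≤ n - 1 →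
      a (k + 1) ≤ a k + 1 ∨ ∃ j : ℕ, 1 ≤ j ∧ j ≤ k - 1 ∧ a (k + 1) ≤ a k + a j - 1)
    {m : ℕ} (hm : 1 ≤ m) (hmn : m ≤ n) : a m ≤ (Nat.fib (m + 1) : ℝ) + 1 := by
  induction m using Nat.strong_induction_on with
  | _ m ih =>
    obtain rfl | ⟨k, hk, rfl⟩ : m = 1 ∨ ∃ k, 1 ≤ k ∧ m = k + 1 := by
      rcases hm.eq_or_lt with h | h
      · exact Or.inl h.symm
      · exact Or.inr ⟨m - 1, by omega, by omega⟩
    · norm_num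
      linarith
    · have hrec : (Nat.fib (k + 1 + 1) : ℝ) = Nat.fib k + Nat.fib (k + 1) := by
        exact_mod_cast Nat.fib_add_two
      have hak := ih k (by omega) hk (by omega)
      rcases hstep k hk (by omega) with h | ⟨j, hj, hjk, h⟩
      · have hpos : (1 : ℝ) ≤ Nat.fib k := by
          exact_mod_cast Nat.fib_pos.2 hk
        linarith
      · have haj := ih j (by omega) hj (by omega)
        have hmono : (Nat.fib (j + 1) : ℝ) ≤ Nat.fib k := by
          exact_mod_cast Nat.fib_mono (show j + 1 ≤ k by omega)
        linarith

/-- The arithmetic core of Lemma 3.14: if `a 1 ≤ 2` and each later term grows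
by at most `1` or by at most `a j - 1` for some earlier index `j`, then
`a n ≤ Fib (n+1) + 1 ≤ 2 ^ n`. Here `Nat.fib` satisfies
`Nat.fib 1 = Nat.fib 2 = 1` and the Fibonacci recursion. -/
theorem stmt_6 (n : ℕ) (hn : 1 ≤ n) (a : ℕ → ℝ) (h1 : a 1 ≤ 2)
    (hstep : ∀ k : ℕ, 1 ≤ k → k ≤ n - 1 →
      a (k + 1) ≤ a k + 1 ∨ ∃ j : ℕ, 1 ≤ j ∧ j ≤ k - 1 ∧ a (k + 1) ≤ a k + a j - 1) :
    a n ≤ (Nat.fib (n + 1) : ℝ) + 1 ∧ a n ≤ 2 ^ n := by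
  have hfib := le_fib_succ_add_one_of_step h1 hstep hn le_rfl
  exact ⟨hfib, hfib.trans (by exact_mod_cast fib_succ_add_one_le_two_pow hn)⟩
end
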